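/- Let N = 9 and let B be the open unit ball in ℝ⁹. Define on (0,1) the functions φ(r) := r^{−7/2} + r − 1.9 and ψ(r) := r^{−5/2} + 20r^{−1.69} + 10r^{−1} + 10r + 7r² − 48, and set P(r) := −(φ''(r) + (8/r)φ'(r))/φ(r) and Q(r) := −(ψ''(r) + (6/r)ψ'(r))/ψ(r). Then for every u ∈ C_c^∞(B), ∫_B (Δu)² dx ≥ ∫_B Q(|x|)(P(|x|) + 8/|x|²) u(x)² dx. -/

import Mathlib

open MeasureTheory Metric Set Filter

/-- The Laplacian of `u : ℝ^N → ℝ`, as the sum of pure second partial derivatives. -/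
noncomputable def lap {N : ℕ} (u : EuclideanSpace ℝ (Fin N) → ℝ) (x : EuclideanSpace ℝ (Fin N)) : ℝ :=
  ∑ i : Fin N, fderiv ℝ (fun y => fderiv ℝ u y (EuclideanSpace.single i 1)) x
    (EuclideanSpace.single i 1)

/-- The biharmonic operator `Δ²`. -/
noncomputable def biharm {N : ℕ} (u : EuclideanSpace ℝ (Fin N) → ℝ)
    (x : EuclideanSpace ℝ (Fin N)) : ℝ :=
  lap (lap u) x

/-- The radial profile `φ(r) = r^{-7/2} + r - 1.9` (here `N = 9`). -/
noncomputable def phiFun (r : ℝ) : ℝ := r ^ (-(7 : ℝ) / 2) + r - 1.9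

/-- The radial profile `ψ(r) = r^{-5/2} + 20 r^{-1.69} + 10 r⁻¹ + 10 r + 7 r² - 48`. -/
noncomputable def psiFun (r : ℝ) : ℝ :=
  r ^ (-(5 : ℝ) / 2) + 20 * r ^ (-(1.69 : ℝ)) + 10 * r⁻¹ + 10 * r + 7 * r ^ 2 - 48

/-- `P(r) = -(φ''(r) + (8/r) φ'(r)) / φ(r)`. -/
noncomputable def Pfun (r : ℝ) : ℝ :=
  -(deriv (deriv phiFun) r + (8 / r) * deriv phiFun r) / phiFun r

/-- `Q(r) = -(ψ''(r) + (6/r) ψ'(r)) / ψ(r)`. -/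
noncomputable def Qfun (r : ℝ) : ℝ :=
  -(deriv (deriv psiFun) r + (6 / r) * deriv psiFun r) / psiFun r

/-!
Write `d` for the dimension, `D = r² (∂_r² + (d - 1) / r ∂_r)` and `r² Δ = D + Λ`, with `Λ` the
spherical Laplacian. Since `Λ` is a sum of squares of rotation generators, which are skew-symmetric
for `‖x‖⁻⁴ dx` and commute with `D`, the cross term `∫ ‖x‖⁻⁴ D u Λ u` equals
`-∑ ∫ ‖x‖⁻⁴ (D A u) (A u)`, and for `d ≥ 5` an integration by parts along rays shows that this is
nonnegative. Hence `∫ (Δ u)² ≥ ∫ ‖x‖⁻⁴ (D u)²`, and the inequality need only be proved on every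
ray, for `f r = u (r z)`.

There it is the composition of two one-dimensional Hardy inequalities, each obtained by completing a
square: the Riccati equation of `r φ' / φ` gives
`∫ r ^ (d - 3) w f'² ≤ ∫ r ^ (d - 1) (f'' + (d - 1) / r f')²` with `w = d - 1 + r² P`, and that of
`r ψ' / ψ` gives `∫ r ^ (d - 3) w Q f² ≤ ∫ r ^ (d - 3) w f'²`. The term with `w'` arising in the
second step has a favourable sign because `w` is increasing and `ψ` is decreasing.
-/

open scoped ContDiff Topology RealInnerProductSpace

section PolarCoordinates

/-- A certificate of `0 ≤ ∫ r in 0..ρ, g r`: a function `Φ` vanishing at both ends of `[0, ρ]`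
with `Φ' ≤ g` in between. -/
structure IsSubprimitive (Φ g : ℝ → ℝ) (ρ : ℝ) : Prop where
  continuousOn : ContinuousOn Φ (Icc 0 ρ)
  left_eq_zero : Φ 0 = 0
  right_eq_zero : Φ ρ = 0
  exists_hasDerivAt_le : ∀ r ∈ Ioo 0 ρ, ∃ Φ', HasDerivAt Φ Φ' r ∧ Φ' ≤ g r

lemma IsSubprimitive.integral_nonneg {Φ g : ℝ → ℝ} {ρ : ℝ} (h : IsSubprimitive Φ g ρ)
    (hρ : 0 ≤ ρ) (hg : IntegrableOn g (Icc 0 ρ)) : 0 ≤ ∫ r in 0..ρ, g r := by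
  have hderiv : ∀ r ∈ Ioo 0 ρ, HasDerivAt Φ (deriv Φ r) r ∧ deriv Φ r ≤ g r := by
    intro r hr
    obtain ⟨Φ', hΦ', hle⟩ := h.exists_hasDerivAt_le r hr
    exact hΦ'.deriv ▸ ⟨hΦ', hle⟩
  simpa [h.left_eq_zero, h.right_eq_zero] using
    intervalIntegral.sub_le_integral_of_hasDeriv_right_of_le hρ h.continuousOn
      (fun r hr => (hderiv r hr).1.hasDerivWithinAt) hg (fun r hr => (hderiv r hr).2)

lemma IsSubprimitive.congr {Φ g h : ℝ → ℝ} {ρ : ℝ} (hΦ : IsSubprimitive Φ g ρ)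
    (hgh : EqOn g h (Ioo 0 ρ)) : IsSubprimitive Φ h ρ :=
  { hΦ with exists_hasDerivAt_le := fun r hr => hgh hr ▸ hΦ.exists_hasDerivAt_le r hr }

lemma integrable_volumeIoiPow_iff {n : ℕ} {f : ℝ → ℝ} :
    Integrable (fun r : Ioi (0 : ℝ) => f r) (Measure.volumeIoiPow n) ↔
      IntegrableOn (fun r => r ^ n * f r) (Ioi 0) := by
  rw [Measure.volumeIoiPow,
    integrable_withDensity_iff_integrable_smul' (by fun_prop) (by simp),
    integrableOn_iff_comap_subtypeVal measurableSet_Ioi]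
  refine integrable_congr (.of_forall fun r => ?_)
  simp [ENNReal.toReal_ofReal (pow_nonneg (mem_Ioi.1 r.2).le n)]

lemma integral_volumeIoiPow (n : ℕ) (f : ℝ → ℝ) :
    ∫ r : Ioi (0 : ℝ), f r ∂(Measure.volumeIoiPow n) = ∫ r in Ioi 0, r ^ n * f r := by
  rw [Measure.volumeIoiPow, integral_withDensity_eq_integral_toReal_smul (by fun_prop) (by simp),
    ← integral_subtype_comap measurableSet_Ioi]
  refine integral_congr_ae (.of_forall fun r => ?_)
  simp [ENNReal.toReal_ofReal (pow_nonneg (mem_Ioi.1 r.2).le n)]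

variable {E : Type*} [NormedAddCommGroup E] [NormedSpace ℝ E]

lemma norm_smul_of_norm_eq_one {z : E} (hz : ‖z‖ = 1) {r : ℝ} (hr : 0 ≤ r) : ‖r • z‖ = r := by
  rw [norm_smul, hz, mul_one, Real.norm_of_nonneg hr]

lemma comp_homeomorphUnitSphereProd (F : E → ℝ) :
    (fun p : sphere (0 : E) 1 × Ioi (0 : ℝ) => F (p.2.1 • p.1.1)) ∘ homeomorphUnitSphereProd E =
      F ∘ Subtype.val := by
  funext x
  change F ((homeomorphUnitSphereProd E).symm (homeomorphUnitSphereProd E x)) = F x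
  rw [Homeomorph.symm_apply_apply]

variable [FiniteDimensional ℝ E] [MeasurableSpace E] [BorelSpace E]
  {μ : Measure E} [μ.IsAddHaarMeasure]

lemma integrable_polar {F : E → ℝ} (hF : Integrable F μ) :
    Integrable (fun p : sphere (0 : E) 1 × Ioi (0 : ℝ) => F (p.2.1 • p.1.1))
      (μ.toSphere.prod (.volumeIoiPow (Module.finrank ℝ E - 1))) := by
  rw [← μ.measurePreserving_homeomorphUnitSphereProd.integrable_comp_emb
    (homeomorphUnitSphereProd E).measurableEmbedding, comp_homeomorphUnitSphereProd,
    ← integrableOn_iff_comap_subtypeVal (measurableSet_singleton _).compl]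
  exact hF.integrableOn

lemma integral_eq_integral_polar [Nontrivial E] (F : E → ℝ) :
    ∫ x, F x ∂μ = ∫ p : sphere (0 : E) 1 × Ioi (0 : ℝ), F (p.2.1 • p.1.1)
      ∂(μ.toSphere.prod (.volumeIoiPow (Module.finrank ℝ E - 1))) := by
  have hcomp := μ.measurePreserving_homeomorphUnitSphereProd.integral_comp
    (homeomorphUnitSphereProd E).measurableEmbedding fun p => F (p.2.1 • p.1.1)
  rw [← hcomp]
  calc ∫ x, F x ∂μ = ∫ x in {0}ᶜ, F x ∂μ := by rw [restrict_compl_singleton]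
    _ = _ := (integral_subtype_comap (measurableSet_singleton _).compl F).symm
    _ = _ := congrArg (fun G => ∫ x, G x ∂_) (comp_homeomorphUnitSphereProd F).symm

lemma integral_nonneg_of_integral_ray_nonneg [Nontrivial E] {F : E → ℝ} (hF : Integrable F μ)
    (h : ∀ z : E, ‖z‖ = 1 →
      IntegrableOn (fun r : ℝ => r ^ (Module.finrank ℝ E - 1) * F (r • z)) (Ioi 0) →
      0 ≤ ∫ r in Ioi (0 : ℝ), r ^ (Module.finrank ℝ E - 1) * F (r • z)) :
    0 ≤ ∫ x, F x ∂μ := by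
  have hF_polar := integrable_polar hF
  rw [integral_eq_integral_polar, integral_prod _ hF_polar]
  refine integral_nonneg_of_ae ?_
  filter_upwards [hF_polar.prod_right_ae] with z hz
  rw [integral_volumeIoiPow _ fun r => F (r • z.1)]
  exact h z (by simp) (integrable_volumeIoiPow_iff.1 hz)

lemma integral_nonneg_of_isSubprimitive_ray [Nontrivial E] {ρ : ℝ} (hρ : 0 ≤ ρ) {F : E → ℝ}
    (hF : Integrable F μ) (hF_zero : ∀ x, ρ ≤ ‖x‖ → F x = 0)
    (h : ∀ z : E, ‖z‖ = 1 →
      ∃ Φ, IsSubprimitive Φ (fun r => r ^ (Module.finrank ℝ E - 1) * F (r • z)) ρ) :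
    0 ≤ ∫ x, F x ∂μ := by
  refine integral_nonneg_of_integral_ray_nonneg hF fun z hz hint => ?_
  have hcut : ∫ r in Ioi (0 : ℝ), r ^ (Module.finrank ℝ E - 1) * F (r • z) =
      ∫ r in (0 : ℝ)..ρ, r ^ (Module.finrank ℝ E - 1) * F (r • z) := by
    rw [intervalIntegral.integral_of_le hρ]
    refine setIntegral_eq_of_subset_of_forall_sdiff_eq_zero measurableSet_Ioi
      Ioc_subset_Ioi_self fun r hr => ?_
    have hρr : ρ ≤ r := (not_le.1 fun hle => hr.2 ⟨hr.1, hle⟩).le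
    rw [hF_zero _ (hρr.trans_eq (norm_smul_of_norm_eq_one hz (le_of_lt hr.1)).symm), mul_zero]
  obtain ⟨Φ, hΦ⟩ := h z hz
  rw [hcut]
  exact hΦ.integral_nonneg hρ <|
    (integrableOn_Icc_iff_integrableOn_Ioc).2 (hint.mono_set Ioc_subset_Ioi_self)

lemma integrable_inv_norm_pow_mul {k : ℕ} (hk : k < Module.finrank ℝ E) {f : E → ℝ}
    (hf : Continuous f) (hf_supp : HasCompactSupport f) :
    Integrable (fun x => (‖x‖ ^ k)⁻¹ * f x) μ := by
  obtain ⟨R, hR⟩ := hf_supp.isCompact.isBounded.subset_ball (0 : E)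
  obtain ⟨C, hC⟩ := hf.bounded_above_of_compact_support hf_supp
  have : Nontrivial E := Module.nontrivial_of_finrank_pos (Nat.zero_lt_of_lt hk)
  have hweight : IntegrableOn (fun x : E => (‖x‖ ^ k)⁻¹) (ball 0 R) μ := by
    rw [integrableOn_fun_norm_addHaar μ (f := fun r => (r ^ k)⁻¹)]
    have hpow : IntegrableOn (fun r : ℝ => r ^ (Module.finrank ℝ E - 1 - k)) (Ioo 0 R) :=
      ((continuous_pow _).integrableOn_Icc (a := 0) (b := R)).mono_set Ioo_subset_Icc_self
    refine hpow.congr_fun (fun r hr => ?_) measurableSet_Ioo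
    rw [smul_eq_mul, ← div_eq_mul_inv]
    exact pow_sub₀ r hr.1.ne' (by omega)
  have hsub : Function.support (fun x : E => (‖x‖ ^ k)⁻¹ * f x) ⊆ ball 0 R :=
    (Function.support_mul_subset_right _ _).trans ((subset_tsupport f).trans hR)
  exact (integrableOn_iff_integrable_of_support_subset hsub).1
    (hweight.mul_bdd hf.aestronglyMeasurable.restrict (.of_forall hC))

lemma tendsto_integral_inv_norm_sq_add_pow_mul [Nontrivial E] {m : ℕ} {f : E → ℝ}
    (hf : Continuous f) (hint : Integrable (fun x => (‖x‖ ^ (2 * m))⁻¹ * f x) μ) :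
    Tendsto (fun ε : ℝ => ∫ x, ((‖x‖ ^ 2 + ε) ^ m)⁻¹ * f x ∂μ) (𝓝[>] 0)
      (𝓝 (∫ x, (‖x‖ ^ (2 * m))⁻¹ * f x ∂μ)) := by
  refine tendsto_integral_filter_of_dominated_convergence
    (fun x => ‖(‖x‖ ^ (2 * m))⁻¹ * f x‖) ?_ ?_ hint.norm ?_
  · filter_upwards [self_mem_nhdsWithin] with ε (hε : 0 < ε)
    have hbase : ∀ x : E, (‖x‖ ^ 2 + ε) ^ m ≠ 0 := fun x => by positivity
    exact (Continuous.mul (by fun_prop (disch := exact hbase _)) hf).aestronglyMeasurable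
  · filter_upwards [self_mem_nhdsWithin] with ε (hε : 0 < ε)
    filter_upwards [Measure.ae_ne μ 0] with x hx
    rw [norm_mul, norm_mul, norm_inv, norm_inv, pow_mul, norm_pow, norm_pow _ m,
      Real.norm_of_nonneg (by positivity), Real.norm_of_nonneg (sq_nonneg ‖x‖)]
    gcongr
    exact le_add_of_nonneg_right hε.le
  · filter_upwards [Measure.ae_ne μ 0] with x hx
    have hcont : ContinuousAt (fun ε : ℝ => ((‖x‖ ^ 2 + ε) ^ m)⁻¹ * f x) 0 := by
      have : (‖x‖ ^ 2 + 0) ^ m ≠ 0 := by positivity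
      fun_prop (disch := assumption)
    simpa [pow_mul] using hcont.tendsto.mono_left nhdsWithin_le_nhds

end PolarCoordinates

section DerivAlong

variable {E : Type*} [NormedAddCommGroup E] [NormedSpace ℝ E]

/-- The derivative of `u` along the linear vector field `x ↦ A x`. For `A = id` this is the Euler
operator `r ∂_r`; for a skew `A` it is an angular derivative. -/
noncomputable def derivAlong (A : E →L[ℝ] E) (u : E → ℝ) (x : E) : ℝ := fderiv ℝ u x (A x)

lemma contDiff_derivAlong {m n : WithTop ℕ∞} {u : E → ℝ} (hu : ContDiff ℝ n u)
    (hmn : m + 1 ≤ n) (A : E →L[ℝ] E) : ContDiff ℝ m (derivAlong A u) :=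
  (hu.fderiv_right hmn).clm_apply A.contDiff

lemma tsupport_derivAlong_subset (A : E →L[ℝ] E) (u : E → ℝ) :
    tsupport (derivAlong A u) ⊆ tsupport u := by
  refine closure_minimal (fun x hx => ?_) (isClosed_tsupport u)
  contrapose! hx
  simp [derivAlong, fderiv_of_notMem_tsupport ℝ hx]

lemma hasCompactSupport_derivAlong {u : E → ℝ} (hu : HasCompactSupport u) (A : E →L[ℝ] E) :
    HasCompactSupport (derivAlong A u) :=
  hu.of_isClosed_subset (isClosed_tsupport _) (tsupport_derivAlong_subset A u)

lemma derivAlong_mul (A : E →L[ℝ] E) {u v : E → ℝ} {x : E} (hu : DifferentiableAt ℝ u x)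
    (hv : DifferentiableAt ℝ v x) :
    derivAlong A (u * v) x = u x * derivAlong A v x + v x * derivAlong A u x := by
  simp [derivAlong, fderiv_mul hu hv]

lemma derivAlong_derivAlong (A B : E →L[ℝ] E) {u : E → ℝ} (hu : ContDiff ℝ 2 u) (x : E) :
    derivAlong A (derivAlong B u) x =
      fderiv ℝ (fderiv ℝ u) x (A x) (B x) + fderiv ℝ u x (B (A x)) := by
  have hd : Differentiable ℝ (fderiv ℝ u) :=
    (hu.fderiv_right one_add_one_eq_two.le).differentiable one_ne_zero
  have h : fderiv ℝ (derivAlong B u) x = _ :=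
    ((hd x).hasFDerivAt.clm_apply (B.hasFDerivAt (x := x))).fderiv
  rw [derivAlong, h]
  simp [add_comm]

lemma fderiv_fderiv_comm {u : E → ℝ} (hu : ContDiff ℝ 2 u) (x v w : E) :
    fderiv ℝ (fderiv ℝ u) x v w = fderiv ℝ (fderiv ℝ u) x w v :=
  hu.contDiffAt.isSymmSndFDerivAt (by simp) v w

lemma derivAlong_id_comm (A : E →L[ℝ] E) {u : E → ℝ} (hu : ContDiff ℝ 2 u) :
    derivAlong A (derivAlong (.id ℝ E) u) = derivAlong (.id ℝ E) (derivAlong A u) := by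
  funext x
  simp [derivAlong_derivAlong, hu, fderiv_fderiv_comm hu x (A x)]

/-- `r² (∂_r² + (d - 1) / r ∂_r)` for `d = dim E`: the radial part of the Laplacian, multiplied by
`r²` so that it is a polynomial in the Euler operator `r ∂_r` and has no pole at the origin. -/
noncomputable def scaledRadialLap (u : E → ℝ) (x : E) : ℝ :=
  derivAlong (.id ℝ E) (derivAlong (.id ℝ E) u) x +
    (Module.finrank ℝ E - 2) * derivAlong (.id ℝ E) u x

lemma contDiff_scaledRadialLap {n : WithTop ℕ∞} {u : E → ℝ} (hu : ContDiff ℝ (n + 2) u) :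
    ContDiff ℝ n (scaledRadialLap u) := by
  have h1 : ContDiff ℝ (n + 1) (derivAlong (.id ℝ E) u) :=
    contDiff_derivAlong hu (by rw [add_assoc, one_add_one_eq_two]) _
  exact (contDiff_derivAlong h1 le_rfl _).add (contDiff_const.mul (h1.of_le le_self_add))

lemma tsupport_scaledRadialLap_subset (u : E → ℝ) :
    tsupport (scaledRadialLap u) ⊆ tsupport u := by
  have h1 := tsupport_derivAlong_subset (.id ℝ E) u
  refine (tsupport_add _ _).trans (union_subset
    ((tsupport_derivAlong_subset _ _).trans h1) (tsupport_mul_subset_right.trans h1))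

lemma scaledRadialLap_derivAlong (A : E →L[ℝ] E) {u : E → ℝ} (hu : ContDiff ℝ 3 u) (x : E) :
    derivAlong A (scaledRadialLap u) x = scaledRadialLap (derivAlong A u) x := by
  have h1 : ContDiff ℝ 2 (derivAlong (.id ℝ E) u) :=
    contDiff_derivAlong hu two_add_one_eq_three.le _
  have h2 : ContDiff ℝ 1 (derivAlong (.id ℝ E) (derivAlong (.id ℝ E) u)) :=
    contDiff_derivAlong h1 one_add_one_eq_two.le _
  have hlin : derivAlong A (scaledRadialLap u) x =
      derivAlong A (derivAlong (.id ℝ E) (derivAlong (.id ℝ E) u)) x +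
        (Module.finrank ℝ E - 2) * derivAlong A (derivAlong (.id ℝ E) u) x := by
    have hd1 := h1.differentiable two_ne_zero x
    have hd2 := h2.differentiable one_ne_zero x
    have h : fderiv ℝ (scaledRadialLap u) x = _ :=
      (hd2.hasFDerivAt.add (hd1.hasFDerivAt.const_mul _)).fderiv
    rw [derivAlong, h]
    simp [derivAlong]
  rw [hlin, derivAlong_id_comm A h1, derivAlong_id_comm A (hu.of_le (by norm_num))]
  rfl

lemma hasDerivAt_comp_smul {u : E → ℝ} (hu : ContDiff ℝ 1 u) (z : E) (r : ℝ) :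
    HasDerivAt (fun r : ℝ => u (r • z)) (fderiv ℝ u (r • z) z) r := by
  have hray : HasDerivAt (fun r : ℝ => r • z) z r := by simpa using (hasDerivAt_id r).smul_const z
  exact (hu.differentiable one_ne_zero _).hasFDerivAt.comp_hasDerivAt r hray

lemma hasDerivAt_fderiv_comp_smul {u : E → ℝ} (hu : ContDiff ℝ 2 u) (z : E) (r : ℝ) :
    HasDerivAt (fun r : ℝ => fderiv ℝ u (r • z) z) (fderiv ℝ (fderiv ℝ u) (r • z) z z) r := by
  have hd : Differentiable ℝ (fderiv ℝ u) :=
    (hu.fderiv_right one_add_one_eq_two.le).differentiable one_ne_zero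
  have hray : HasDerivAt (fun r : ℝ => r • z) z r := by simpa using (hasDerivAt_id r).smul_const z
  simpa using ((hd _).hasFDerivAt.comp_hasDerivAt r hray).clm_apply (hasDerivAt_const r z)

lemma scaledRadialLap_smul {u : E → ℝ} (hu : ContDiff ℝ 2 u) (z : E) (r : ℝ) :
    scaledRadialLap u (r • z) = r ^ 2 * fderiv ℝ (fderiv ℝ u) (r • z) z z +
      (Module.finrank ℝ E - 1) * r * fderiv ℝ u (r • z) z := by
  rw [scaledRadialLap, derivAlong_derivAlong _ _ hu]
  simp only [derivAlong, ContinuousLinearMap.id_apply, map_smul, smul_apply, smul_eq_mul]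
  ring

end DerivAlong

section SkewFields

variable {E : Type*} [NormedAddCommGroup E] [InnerProductSpace ℝ E] {A : E →L[ℝ] E}

lemma derivAlong_comp_norm_sq_eq_zero (hA : ∀ x, ⟪x, A x⟫ = 0) {g : ℝ → ℝ} {x : E}
    (hg : DifferentiableAt ℝ g (‖x‖ ^ 2)) : derivAlong A (fun y => g (‖y‖ ^ 2)) x = 0 := by
  have h : fderiv ℝ (fun y => g (‖y‖ ^ 2)) x = _ :=
    (hg.hasDerivAt.comp_hasFDerivAt x (hasStrictFDerivAt_norm_sq x).hasFDerivAt).fderiv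
  simp [derivAlong, h, hA]

variable [FiniteDimensional ℝ E] [MeasurableSpace E] [BorelSpace E]
  {μ : Measure E} [μ.IsAddHaarMeasure]

lemma integral_derivAlong_eq_zero (hA : ∀ x, ⟪x, A x⟫ = 0) {f : E → ℝ} (hf : ContDiff ℝ 1 f)
    (hf_supp : HasCompactSupport f) : ∫ x, derivAlong A f x ∂μ = 0 := by
  let b := stdOrthonormalBasis ℝ E
  have hexpand : ∀ x, derivAlong A f x = ∑ i, ⟪b i, A x⟫ * fderiv ℝ f x (b i) := by
    intro x
    conv_lhs => rw [derivAlong, ← b.sum_repr' (A x)]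
    simp
  have hcoord : ∀ i, Differentiable ℝ fun x => ⟪b i, A x⟫ := fun i =>
    ((innerSL ℝ (b i)).comp A).differentiable
  have hcoord_deriv : ∀ i x, fderiv ℝ (fun x => ⟪b i, A x⟫) x (b i) = 0 := by
    intro i x
    have h : fderiv ℝ (fun x => ⟪b i, A x⟫) x = (innerSL ℝ (b i)).comp A :=
      ((innerSL ℝ (b i)).comp A).fderiv
    simp [h, hA]
  have hterm : ∀ i, Integrable (fun x => ⟪b i, A x⟫ * fderiv ℝ f x (b i)) μ := fun i =>
    Continuous.integrable_of_hasCompactSupport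
      ((hcoord i).continuous.mul ((hf.continuous_fderiv one_ne_zero).clm_apply continuous_const))
      ((hf_supp.fderiv_apply ℝ (b i)).mul_left)
  simp_rw [hexpand]
  rw [integral_finsetSum _ fun i _ => hterm i]
  refine Finset.sum_eq_zero fun i _ => ?_
  rw [integral_mul_fderiv_eq_neg_fderiv_mul_of_integrable _ (hterm i) _
    (fun x _ => hcoord i x) (fun x _ => hf.differentiable one_ne_zero x)]
  · simp [hcoord_deriv]
  · simp [hcoord_deriv]
  · exact ((hcoord i).continuous.mul hf.continuous).integrable_of_hasCompactSupport
      hf_supp.mul_left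

lemma integral_mul_derivAlong_eq_zero (hA : ∀ x, ⟪x, A x⟫ = 0) {w f : E → ℝ}
    (hw : ContDiff ℝ 1 w) (hw_zero : ∀ x, derivAlong A w x = 0) (hf : ContDiff ℝ 1 f)
    (hf_supp : HasCompactSupport f) : ∫ x, w x * derivAlong A f x ∂μ = 0 := by
  rw [← integral_derivAlong_eq_zero (μ := μ) hA (hw.mul hf) hf_supp.mul_left]
  refine integral_congr_ae (.of_forall fun x => ?_)
  change _ = derivAlong A (w * f) x
  simp [derivAlong_mul A (hw.differentiable one_ne_zero x) (hf.differentiable one_ne_zero x),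
    hw_zero]

-- `‖x‖ ^ (-2m)` is singular at the origin; regularize it to `(‖x‖ ^ 2 + ε) ^ (-m)`.
lemma integral_inv_norm_pow_mul_derivAlong_eq_zero (hA : ∀ x, ⟪x, A x⟫ = 0) {m : ℕ}
    (hm : 2 * m < Module.finrank ℝ E) {f : E → ℝ} (hf : ContDiff ℝ 1 f)
    (hf_supp : HasCompactSupport f) :
    ∫ x, (‖x‖ ^ (2 * m))⁻¹ * derivAlong A f x ∂μ = 0 := by
  have : Nontrivial E := Module.nontrivial_of_finrank_pos (Nat.zero_lt_of_lt hm)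
  have hf' : Continuous (derivAlong A f) := (contDiff_derivAlong (m := 0) hf le_rfl A).continuous
  have hlim := tendsto_integral_inv_norm_sq_add_pow_mul (μ := μ) hf'
    (integrable_inv_norm_pow_mul hm hf' (hasCompactSupport_derivAlong hf_supp A))
  refine tendsto_nhds_unique (hlim.congr' ?_) tendsto_const_nhds
  filter_upwards [self_mem_nhdsWithin] with ε (hε : 0 < ε)
  have hbase : ∀ x : E, (‖x‖ ^ 2 + ε) ^ m ≠ 0 := fun x => by positivity
  exact integral_mul_derivAlong_eq_zero hA
    ((((contDiff_norm_sq ℝ).add contDiff_const).pow m).inv hbase)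
    (fun x => derivAlong_comp_norm_sq_eq_zero hA (g := fun t => ((t + ε) ^ m)⁻¹)
      (DifferentiableAt.inv (by fun_prop) (hbase x))) hf hf_supp

end SkewFields

section CrossTerm

lemma isSubprimitive_neg_radialLap_mul_self {f f' f'' : ℝ → ℝ} (hf : ∀ r, HasDerivAt f (f' r) r)
    (hf' : ∀ r, HasDerivAt f' (f'' r) r) {ρ : ℝ} (hfρ : f ρ = 0) (m : ℕ) :
    IsSubprimitive (fun r => -(r ^ (m + 2) * (f' r * f r) + r ^ (m + 1) * f r ^ 2))
      (fun r => -(r ^ m * ((r ^ 2 * f'' r + (m + 4) * r * f' r) * f r))) ρ := by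
  have hfc : Continuous f := continuous_iff_continuousAt.2 fun r => (hf r).continuousAt
  have hfc' : Continuous f' := continuous_iff_continuousAt.2 fun r => (hf' r).continuousAt
  refine ⟨by fun_prop, by simp, by simp [hfρ], fun r hr => ⟨_,
    (((hasDerivAt_pow (m + 2) r).mul ((hf' r).mul (hf r))).add
      ((hasDerivAt_pow (m + 1) r).mul ((hf r).pow 2))).neg, ?_⟩⟩
  have hr0 : 0 < r := hr.1
  have hremainder : 0 ≤ r ^ m * (r * f' r) ^ 2 + (m + 1) * r ^ m * f r ^ 2 := by positivity
  simp only [Pi.mul_apply, Pi.pow_apply, Nat.add_one_sub_one]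
  push_cast
  ring_nf at hremainder ⊢
  linarith

variable {E : Type*} [NormedAddCommGroup E]

lemma exists_forall_notMem_tsupport {u : E → ℝ} (hu : HasCompactSupport u) :
    ∃ ρ, 0 < ρ ∧ ∀ x, ρ ≤ ‖x‖ → x ∉ tsupport u := by
  obtain ⟨ρ, hρ, hsub⟩ := hu.isCompact.isBounded.subset_ball_lt 0 (0 : E)
  exact ⟨ρ, hρ, fun x hx hxu => hx.not_gt (mem_ball_zero_iff.1 (hsub hxu))⟩

section

variable [NormedSpace ℝ E] [FiniteDimensional ℝ E] [MeasurableSpace E] [BorelSpace E]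
  {μ : Measure E} [μ.IsAddHaarMeasure]

lemma integrable_inv_norm_pow_mul_scaledRadialLap_mul (hd : 5 ≤ Module.finrank ℝ E)
    {u v : E → ℝ} (hu : ContDiff ℝ 2 u) (hu_supp : HasCompactSupport u) (hv : Continuous v) :
    Integrable (fun x => (‖x‖ ^ 4)⁻¹ * (scaledRadialLap u x * v x)) μ :=
  have hDu_supp : HasCompactSupport (scaledRadialLap u) :=
    hu_supp.of_isClosed_subset (isClosed_tsupport _) (tsupport_scaledRadialLap_subset u)
  integrable_inv_norm_pow_mul hd ((contDiff_scaledRadialLap (n := 0) hu).continuous.mul hv)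
    hDu_supp.mul_right

lemma integral_scaledRadialLap_mul_self_nonpos (hd : 5 ≤ Module.finrank ℝ E) {v : E → ℝ}
    (hv : ContDiff ℝ 2 v) (hv_supp : HasCompactSupport v) :
    ∫ x, (‖x‖ ^ 4)⁻¹ * (scaledRadialLap v x * v x) ∂μ ≤ 0 := by
  obtain ⟨m, hm⟩ := Nat.exists_eq_add_of_le' hd
  have : Nontrivial E := Module.nontrivial_of_finrank_pos (R := ℝ) (by omega)
  obtain ⟨ρ, hρ, hv_zero⟩ := exists_forall_notMem_tsupport hv_supp
  rw [← neg_nonneg, ← integral_neg]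
  refine integral_nonneg_of_isSubprimitive_ray hρ.le
    (integrable_inv_norm_pow_mul_scaledRadialLap_mul hd hv hv_supp hv.continuous).neg
    (fun x hx => by simp [image_eq_zero_of_notMem_tsupport (hv_zero x hx)]) fun z hz => ?_
  have hvρ : v (ρ • z) = 0 := image_eq_zero_of_notMem_tsupport
    (hv_zero _ (norm_smul_of_norm_eq_one hz hρ.le).ge)
  refine ⟨_, (isSubprimitive_neg_radialLap_mul_self
    (hasDerivAt_comp_smul (hv.of_le one_le_two) z) (hasDerivAt_fderiv_comp_smul hv z)
    hvρ m).congr fun r hr => ?_⟩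
  have hr0 : r ≠ 0 := hr.1.ne'
  simp only [norm_smul_of_norm_eq_one hz hr.1.le, scaledRadialLap_smul hv, hm,
    show m + 5 - 1 = m + 4 by rfl]
  push_cast
  field_simp
  ring

end

variable [InnerProductSpace ℝ E] [FiniteDimensional ℝ E] [MeasurableSpace E] [BorelSpace E]
  {μ : Measure E} [μ.IsAddHaarMeasure]

-- `A` is skew-symmetric for `‖x‖⁻⁴ dx` and commutes with the radial Laplacian, so the integral
-- equals `-∫ ‖x‖⁻⁴ (scaledRadialLap (A u)) (A u)`.
lemma integral_scaledRadialLap_mul_derivAlong_derivAlong_nonneg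
    (hd : 5 ≤ Module.finrank ℝ E) {A : E →L[ℝ] E} (hA : ∀ x, ⟪x, A x⟫ = 0) {u : E → ℝ}
    (hu : ContDiff ℝ 3 u) (hu_supp : HasCompactSupport u) :
    0 ≤ ∫ x, (‖x‖ ^ 4)⁻¹ * (scaledRadialLap u x * derivAlong A (derivAlong A u) x) ∂μ := by
  have hAu : ContDiff ℝ 2 (derivAlong A u) := contDiff_derivAlong hu two_add_one_eq_three.le A
  have hAu_supp := hasCompactSupport_derivAlong hu_supp A
  have hDu : ContDiff ℝ 1 (scaledRadialLap u) := contDiff_scaledRadialLap (by simpa)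
  have hcross := integrable_inv_norm_pow_mul_scaledRadialLap_mul (μ := μ) hd
    (hu.of_le (by norm_num)) hu_supp
    (contDiff_derivAlong (m := 1) hAu one_add_one_eq_two.le A).continuous
  have hself := integrable_inv_norm_pow_mul_scaledRadialLap_mul (μ := μ) hd hAu hAu_supp
    hAu.continuous
  have hleibniz : ∀ x, (‖x‖ ^ 4)⁻¹ * derivAlong A (scaledRadialLap u * derivAlong A u) x =
      (‖x‖ ^ 4)⁻¹ * (scaledRadialLap u x * derivAlong A (derivAlong A u) x) +
        (‖x‖ ^ 4)⁻¹ * (scaledRadialLap (derivAlong A u) x * derivAlong A u x) := by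
    intro x
    rw [derivAlong_mul A (hDu.differentiable one_ne_zero x) (hAu.differentiable two_ne_zero x),
      scaledRadialLap_derivAlong A hu]
    ring
  have hskew : ∫ x, (‖x‖ ^ 4)⁻¹ * derivAlong A (scaledRadialLap u * derivAlong A u) x ∂μ = 0 :=
    integral_inv_norm_pow_mul_derivAlong_eq_zero (m := 2) hA hd
      (hDu.mul (hAu.of_le one_le_two)) hAu_supp.mul_left
  rw [integral_congr_ae (.of_forall hleibniz), integral_add hcross hself] at hskew
  linarith [integral_scaledRadialLap_mul_self_nonpos (μ := μ) hd hAu hAu_supp]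

end CrossTerm

section Laplacian

variable {N : ℕ}

/-- The generator `x_i ∂_j - x_j ∂_i` of the rotations in the `(i, j)`-plane. -/
noncomputable def rotationGenerator (i j : Fin N) :
    EuclideanSpace ℝ (Fin N) →L[ℝ] EuclideanSpace ℝ (Fin N) :=
  (EuclideanSpace.proj i : _ →L[ℝ] ℝ).smulRight (EuclideanSpace.single j 1) -
    (EuclideanSpace.proj j : _ →L[ℝ] ℝ).smulRight (EuclideanSpace.single i 1)

lemma rotationGenerator_apply (i j : Fin N) (x : EuclideanSpace ℝ (Fin N)) :
    rotationGenerator i j x =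
      x i • EuclideanSpace.single j (1 : ℝ) - x j • EuclideanSpace.single i (1 : ℝ) := by
  simp [rotationGenerator]

lemma inner_rotationGenerator_self (i j : Fin N) (x : EuclideanSpace ℝ (Fin N)) :
    ⟪x, rotationGenerator i j x⟫ = 0 := by
  simp [rotationGenerator_apply, inner_sub_right, inner_smul_right,
    EuclideanSpace.inner_single_right, mul_comm]

lemma lap_eq_sum_fderiv_fderiv {u : EuclideanSpace ℝ (Fin N) → ℝ} (hu : ContDiff ℝ 2 u)
    (x : EuclideanSpace ℝ (Fin N)) :
    lap u x = ∑ i, fderiv ℝ (fderiv ℝ u) x (.single i 1) (.single i 1) := by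
  have hd : Differentiable ℝ (fderiv ℝ u) :=
    (hu.fderiv_right one_add_one_eq_two.le).differentiable one_ne_zero
  refine Finset.sum_congr rfl fun i _ => ?_
  simp [((hd x).hasFDerivAt.clm_apply (hasFDerivAt_const _ x)).fderiv]

lemma continuous_lap {u : EuclideanSpace ℝ (Fin N) → ℝ} (hu : ContDiff ℝ 2 u) :
    Continuous (lap u) := by
  have : Continuous (fderiv ℝ (fderiv ℝ u)) :=
    (hu.fderiv_right one_add_one_eq_two.le).continuous_fderiv one_ne_zero
  rw [funext (lap_eq_sum_fderiv_fderiv hu)]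
  fun_prop

lemma tsupport_lap_subset (u : EuclideanSpace ℝ (Fin N) → ℝ) : tsupport (lap u) ⊆ tsupport u := by
  refine closure_minimal (fun x hx => ?_) (isClosed_tsupport u)
  obtain ⟨i, -, hi⟩ := Finset.exists_ne_zero_of_sum_ne_zero hx
  contrapose! hi
  rw [fderiv_of_notMem_tsupport ℝ fun h => hi (tsupport_fderiv_apply_subset ℝ _ h)]
  rfl

lemma sum_sum_rotationGenerator_comp_self (x : EuclideanSpace ℝ (Fin N)) :
    ∑ i, ∑ j, rotationGenerator i j (rotationGenerator i j x) = (-2 * (N - 1) : ℝ) • x := by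
  ext k
  simp only [rotationGenerator_apply]
  simp [Finset.sum_sub_distrib, Pi.single_apply, mul_sub]
  ring

lemma sum_sum_apply_rotationGenerator_rotationGenerator
    {H : EuclideanSpace ℝ (Fin N) →L[ℝ] EuclideanSpace ℝ (Fin N) →L[ℝ] ℝ}
    (hH : ∀ v w, H v w = H w v) (x : EuclideanSpace ℝ (Fin N)) :
    ∑ i, ∑ j, H (rotationGenerator i j x) (rotationGenerator i j x) =
      2 * (‖x‖ ^ 2 * ∑ i, H (.single i 1) (.single i 1) - H x x) := by
  let e : Fin N → EuclideanSpace ℝ (Fin N) := fun i => .single i 1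
  have hterm : ∀ i j, H (rotationGenerator i j x) (rotationGenerator i j x) =
      x i ^ 2 * H (e j) (e j) + x j ^ 2 * H (e i) (e i) - 2 * (x i * x j * H (e i) (e j)) := by
    intro i j
    rw [rotationGenerator_apply]
    change H (x i • e j - x j • e i) (x i • e j - x j • e i) = _
    simp only [map_sub, map_smul, sub_apply, smul_apply, smul_eq_mul, hH (e j) (e i)]
    ring
  have hx : ∑ i, x i • e i = x := by
    simpa [e] using (EuclideanSpace.basisFun (Fin N) ℝ).sum_repr x
  have hHx : H x x = ∑ i, ∑ j, x i * x j * H (e i) (e j) := by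
    conv_lhs => rw [← hx]
    simp [Finset.mul_sum, mul_assoc, hH (e _) (e _)]
  have hnorm : ‖x‖ ^ 2 = ∑ i, x i ^ 2 := by simp [EuclideanSpace.norm_sq_eq]
  simp_rw [hterm, Finset.sum_sub_distrib, Finset.sum_add_distrib, ← Finset.mul_sum,
    ← Finset.sum_mul, ← hHx, ← hnorm, ← Finset.mul_sum]
  ring

/-- The Laplace-Beltrami operator of the unit sphere acting on `u` in the angular variable; each
rotation plane occurs twice in the double sum. -/
noncomputable def sphericalLap (u : EuclideanSpace ℝ (Fin N) → ℝ) (x : EuclideanSpace ℝ (Fin N)) :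
    ℝ :=
  2⁻¹ * ∑ i, ∑ j, derivAlong (rotationGenerator i j) (derivAlong (rotationGenerator i j) u) x

lemma norm_sq_mul_lap {u : EuclideanSpace ℝ (Fin N) → ℝ} (hu : ContDiff ℝ 2 u)
    (x : EuclideanSpace ℝ (Fin N)) :
    ‖x‖ ^ 2 * lap u x = scaledRadialLap u x + sphericalLap u x := by
  simp_rw [sphericalLap, derivAlong_derivAlong _ _ hu, Finset.sum_add_distrib, ← map_sum,
    sum_sum_rotationGenerator_comp_self,
    sum_sum_apply_rotationGenerator_rotationGenerator (fderiv_fderiv_comm hu x),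
    lap_eq_sum_fderiv_fderiv hu, scaledRadialLap, derivAlong_derivAlong _ _ hu]
  simp [derivAlong]
  ring

lemma inv_norm_pow_mul_scaledRadialLap_sq_add_le_lap_sq {u : EuclideanSpace ℝ (Fin N) → ℝ}
    (hu : ContDiff ℝ 2 u) (x : EuclideanSpace ℝ (Fin N)) :
    (‖x‖ ^ 4)⁻¹ * (scaledRadialLap u x * scaledRadialLap u x) +
      2 * ((‖x‖ ^ 4)⁻¹ * (scaledRadialLap u x * sphericalLap u x)) ≤ lap u x ^ 2 := by
  obtain rfl | hx := eq_or_ne x 0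
  · simpa using sq_nonneg (lap u 0)
  have hlap : lap u x = (scaledRadialLap u x + sphericalLap u x) / ‖x‖ ^ 2 := by
    rw [← norm_sq_mul_lap hu]
    field_simp
  calc (‖x‖ ^ 4)⁻¹ * (scaledRadialLap u x * scaledRadialLap u x) +
        2 * ((‖x‖ ^ 4)⁻¹ * (scaledRadialLap u x * sphericalLap u x))
      = lap u x ^ 2 - (sphericalLap u x / ‖x‖ ^ 2) ^ 2 := by rw [hlap]; field_simp; ring
    _ ≤ lap u x ^ 2 := sub_le_self _ (sq_nonneg _)

lemma continuous_sphericalLap {u : EuclideanSpace ℝ (Fin N) → ℝ} (hu : ContDiff ℝ 2 u) :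
    Continuous (sphericalLap u) :=
  continuous_const.mul <| continuous_finsetSum _ fun _ _ => continuous_finsetSum _ fun _ _ =>
    (contDiff_derivAlong (m := 0) (contDiff_derivAlong (m := 1) hu one_add_one_eq_two.le _)
      le_rfl _).continuous

lemma integral_scaledRadialLap_mul_sphericalLap_nonneg (hN : 5 ≤ N)
    {u : EuclideanSpace ℝ (Fin N) → ℝ} (hu : ContDiff ℝ 3 u) (hu_supp : HasCompactSupport u) :
    0 ≤ ∫ x, (‖x‖ ^ 4)⁻¹ * (scaledRadialLap u x * sphericalLap u x) := by
  have hd : 5 ≤ Module.finrank ℝ (EuclideanSpace ℝ (Fin N)) := by simpa using hN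
  have hterm : ∀ i j : Fin N, Integrable fun x => (‖x‖ ^ 4)⁻¹ * (scaledRadialLap u x *
      derivAlong (rotationGenerator i j) (derivAlong (rotationGenerator i j) u) x) := fun i j =>
    integrable_inv_norm_pow_mul_scaledRadialLap_mul hd (hu.of_le (by norm_num)) hu_supp
      (contDiff_derivAlong (m := 1) (contDiff_derivAlong hu two_add_one_eq_three.le _)
        one_add_one_eq_two.le _).continuous
  have hexpand : ∀ x, (‖x‖ ^ 4)⁻¹ * (scaledRadialLap u x * sphericalLap u x) =
      2⁻¹ * ∑ i, ∑ j, (‖x‖ ^ 4)⁻¹ * (scaledRadialLap u x *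
        derivAlong (rotationGenerator i j) (derivAlong (rotationGenerator i j) u) x) := by
    intro x
    simp_rw [sphericalLap, ← Finset.mul_sum]
    ring
  simp_rw [hexpand, integral_const_mul]
  rw [integral_finsetSum _ fun i _ => integrable_finsetSum _ fun j _ => hterm i j]
  refine mul_nonneg (by norm_num) (Finset.sum_nonneg fun i _ => ?_)
  rw [integral_finsetSum _ fun j _ => hterm i j]
  exact Finset.sum_nonneg fun j _ => integral_scaledRadialLap_mul_derivAlong_derivAlong_nonneg hd
    (inner_rotationGenerator_self i j) hu hu_supp

theorem integral_scaledRadialLap_sq_le_integral_lap_sq (hN : 5 ≤ N)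
    {u : EuclideanSpace ℝ (Fin N) → ℝ} (hu : ContDiff ℝ 3 u) (hu_supp : HasCompactSupport u) :
    ∫ x, (‖x‖ ^ 4)⁻¹ * (scaledRadialLap u x * scaledRadialLap u x) ≤ ∫ x, lap u x ^ 2 := by
  have hu' : ContDiff ℝ 2 u := hu.of_le (by norm_num)
  have hint : ∀ {v : EuclideanSpace ℝ (Fin N) → ℝ}, Continuous v →
      Integrable fun x => (‖x‖ ^ 4)⁻¹ * (scaledRadialLap u x * v x) :=
    integrable_inv_norm_pow_mul_scaledRadialLap_mul (by simpa using hN) hu' hu_supp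
  have hradial := hint (contDiff_scaledRadialLap (n := 0) hu').continuous
  have hcross := (hint (continuous_sphericalLap hu')).const_mul 2
  have hlap_supp : HasCompactSupport (lap u) :=
    hu_supp.of_isClosed_subset (isClosed_tsupport _) (tsupport_lap_subset u)
  have hlap : Integrable fun x => lap u x ^ 2 := by
    simp_rw [sq]
    exact ((continuous_lap hu').mul (continuous_lap hu')).integrable_of_hasCompactSupport
      hlap_supp.mul_left
  have hle := integral_mono (hradial.add hcross) hlap
    (inv_norm_pow_mul_scaledRadialLap_sq_add_le_lap_sq hu')
  rw [integral_add' hradial hcross, integral_const_mul] at hle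
  linarith [integral_scaledRadialLap_mul_sphericalLap_nonneg hN hu hu_supp]

end Laplacian

section HardyRellichPair

/-- The potential `-(φ'' + k / r φ') / φ` for which `φ` solves `φ'' + k / r φ' + V φ = 0`. -/
noncomputable def radialPotential (k : ℝ) (φ : ℝ → ℝ) (r : ℝ) : ℝ :=
  -(deriv (deriv φ) r + k / r * deriv φ r) / φ r

lemma hasDerivAt_mul_logDeriv {φ : ℝ → ℝ} {s : Set ℝ} (hs : IsOpen s) (hφ : ContDiffOn ℝ 2 φ s)
    {r : ℝ} (hrs : r ∈ s) (hφr : φ r ≠ 0) (hr : r ≠ 0) (k : ℝ) :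
    HasDerivAt (fun r => r * logDeriv φ r)
      (-(r ^ 2 * radialPotential k φ r + (r * logDeriv φ r) ^ 2 +
        (k - 1) * (r * logDeriv φ r)) / r) r := by
  have hφ' : ContDiffOn ℝ 1 (deriv φ) s := hφ.deriv_of_isOpen hs (by norm_num)
  have h1 := (hφ.differentiableOn two_ne_zero).differentiableAt (hs.mem_nhds hrs)
  have h2 := (hφ'.differentiableOn one_ne_zero).differentiableAt (hs.mem_nhds hrs)
  refine ((hasDerivAt_id r).mul (h2.hasDerivAt.div h1.hasDerivAt hφr)).congr_deriv ?_
  simp only [radialPotential, logDeriv_apply, id, Pi.div_apply]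
  field_simp
  ring

lemma contDiffOn_radialPotential {φ : ℝ → ℝ} {R : ℝ} {n : WithTop ℕ∞}
    (hφ : ContDiffOn ℝ (n + 2) φ (Ioo 0 R)) (hφ0 : ∀ r ∈ Ioo 0 R, φ r ≠ 0) (k : ℝ) :
    ContDiffOn ℝ n (radialPotential k φ) (Ioo 0 R) := by
  have h1 : ContDiffOn ℝ (n + 1) (deriv φ) (Ioo 0 R) :=
    hφ.deriv_of_isOpen isOpen_Ioo (by rw [add_assoc, one_add_one_eq_two])
  have h2 : ContDiffOn ℝ n (deriv (deriv φ)) (Ioo 0 R) := h1.deriv_of_isOpen isOpen_Ioo le_rfl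
  exact ((h2.add ((contDiffOn_const.div contDiffOn_id fun r hr => hr.1.ne').mul
    (h1.of_le le_self_add))).neg).div (hφ.of_le le_self_add) hφ0

lemma contDiffOn_logDeriv {φ : ℝ → ℝ} {R : ℝ} {n : WithTop ℕ∞}
    (hφ : ContDiffOn ℝ (n + 1) φ (Ioo 0 R)) (hφ0 : ∀ r ∈ Ioo 0 R, φ r ≠ 0) :
    ContDiffOn ℝ n (logDeriv φ) (Ioo 0 R) :=
  (hφ.deriv_of_isOpen isOpen_Ioo le_rfl).div (hφ.of_le le_self_add) hφ0

/-- The weight `w` of the first-order Hardy inequality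
`∫ r ^ (d - 3) w f' ^ 2 ≤ ∫ r ^ (d - 1) (f'' + (d - 1) / r f') ^ 2` generated by `φ`. -/
noncomputable def hardyWeight (d : ℝ) (φ : ℝ → ℝ) (r : ℝ) : ℝ :=
  d - 1 + r ^ 2 * radialPotential (d - 1) φ r

/-- The weight `W` of the second-order inequality `∫ W u ^ 2 ≤ ∫ (Δ u) ^ 2` generated by `φ` and `ψ`
in dimension `d`. -/
noncomputable def hardyRellichWeight (d : ℝ) (φ ψ : ℝ → ℝ) (r : ℝ) : ℝ :=
  radialPotential (d - 3) ψ r * (radialPotential (d - 1) φ r + (d - 1) / r ^ 2)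

lemma hardyRellichWeight_eq {r : ℝ} (hr : r ≠ 0) (d : ℝ) (φ ψ : ℝ → ℝ) :
    hardyRellichWeight d φ ψ r =
      r ^ 2 * radialPotential (d - 3) ψ r * hardyWeight d φ r * (r ^ 4)⁻¹ := by
  rw [hardyRellichWeight, hardyWeight]
  field_simp
  ring

/-- A pair of profiles generating a Hardy-Rellich inequality on the ball of radius `R` in dimension
`d`: `φ` is used to bound `f''` from below by `f'`, then `ψ` to bound `f'` from below by `f`. The
growth conditions at the origin are those of powers of `r`; they make the boundary terms vanish. -/
structure IsHardyRellichPair (d : ℝ) (φ ψ : ℝ → ℝ) (R : ℝ) : Prop where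
  contDiffOn_left : ContDiffOn ℝ 3 φ (Ioo 0 R)
  contDiffOn_right : ContDiffOn ℝ 2 ψ (Ioo 0 R)
  left_ne_zero : ∀ r ∈ Ioo 0 R, φ r ≠ 0
  right_ne_zero : ∀ r ∈ Ioo 0 R, ψ r ≠ 0
  logDeriv_right_nonpos : ∀ r ∈ Ioo 0 R, logDeriv ψ r ≤ 0
  hardyWeight_nonneg : ∀ r ∈ Ioo 0 R, 0 ≤ hardyWeight d φ r
  monotoneOn_hardyWeight : MonotoneOn (hardyWeight d φ) (Ioo 0 R)
  isBigO_logDeriv_left : (fun r => r * logDeriv φ r) =O[𝓝[>] 0] (1 : ℝ → ℝ)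
  isBigO_logDeriv_right : (fun r => r * logDeriv ψ r) =O[𝓝[>] 0] (1 : ℝ → ℝ)
  isBigO_radialPotential_right :
    (fun r => r ^ 2 * radialPotential (d - 3) ψ r) =O[𝓝[>] 0] (1 : ℝ → ℝ)

lemma continuousOn_pow_succ_mul_of_isBigO_one {g : ℝ → ℝ} {ρ : ℝ} (hg : ContinuousOn g (Ioc 0 ρ))
    (hg0 : g =O[𝓝[>] 0] (1 : ℝ → ℝ)) (n : ℕ) :
    ContinuousOn (fun r => r ^ (n + 1) * g r) (Icc 0 ρ) := by
  rintro r hr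
  obtain rfl | hr0 := hr.1.eq_or_lt
  · refine continuousWithinAt_sdiff_self.1 (ContinuousWithinAt.mono (t := Ioi 0) ?_
      fun r hr => hr.1.1.lt_of_ne' hr.2)
    have hpow : (fun r : ℝ => r ^ (n + 1)) =o[𝓝[>] 0] (1 : ℝ → ℝ) := by
      refine (Asymptotics.isLittleO_one_iff ℝ).2 (Tendsto.mono_left ?_ nhdsWithin_le_nhds)
      simpa using (continuous_pow (M := ℝ) (n + 1)).tendsto 0
    simpa [ContinuousWithinAt] using
      (Asymptotics.isLittleO_one_iff ℝ).1 ((hpow.mul_isBigO hg0).congr_right (by simp))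
  · have hmem : Ioc 0 ρ ∈ 𝓝[Icc 0 ρ] r :=
      mem_of_superset (inter_mem_nhdsWithin _ (Ioi_mem_nhds hr0)) fun t ht => ⟨ht.2, ht.1.2⟩
    exact (continuous_pow _).continuousWithinAt.mul
      ((hg r ⟨hr0, hr.2⟩).mono_of_mem_nhdsWithin hmem)

lemma exists_forall_norm_le_of_isBigO_one {g : ℝ → ℝ} {ρ : ℝ} (hg : ContinuousOn g (Ioc 0 ρ))
    (hg0 : g =O[𝓝[>] 0] (1 : ℝ → ℝ)) : ∃ C, ∀ r ∈ Ioc 0 ρ, ‖g r‖ ≤ C := by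
  obtain ⟨C₀, hC₀⟩ := hg0.bound
  obtain ⟨δ, hδ, hsub⟩ := mem_nhdsGT_iff_exists_Ioo_subset.1 hC₀
  obtain ⟨C₁, hC₁⟩ := isCompact_Icc.exists_bound_of_continuousOn
    (hg.mono fun r (hr : r ∈ Icc δ ρ) => ⟨hδ.trans_le hr.1, hr.2⟩)
  refine ⟨max C₀ C₁, fun r hr => ?_⟩
  obtain hrδ | hrδ := lt_or_ge r δ
  · exact le_max_of_le_left (by simpa using hsub ⟨hr.1, hrδ⟩)
  · exact le_max_of_le_right (hC₁ r ⟨hrδ, hr.2⟩)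

lemma integrable_comp_norm_mul {E : Type*} [NormedAddCommGroup E] [MeasurableSpace E]
    [BorelSpace E] {μ : Measure E} [NullSingletonClass μ] {g : ℝ → ℝ} {ρ : ℝ}
    (hg : ContinuousOn g (Ioc 0 ρ)) (hg0 : g =O[𝓝[>] 0] (1 : ℝ → ℝ)) {f : E → ℝ}
    (hf : Integrable f μ) (hf_zero : ∀ x, ρ ≤ ‖x‖ → f x = 0) :
    Integrable (fun x => g ‖x‖ * f x) μ := by
  obtain ⟨C, hC⟩ := exists_forall_norm_le_of_isBigO_one hg hg0
  have hs : MeasurableSet {x : E | ‖x‖ ∈ Ioc 0 ρ} := measurable_norm measurableSet_Ioc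
  have hgs : ContinuousOn (fun x : E => g ‖x‖) {x | ‖x‖ ∈ Ioc 0 ρ} :=
    hg.comp continuous_norm.continuousOn fun _ hx => hx
  have hint : IntegrableOn (fun x => g ‖x‖ * f x) {x | ‖x‖ ∈ Ioc 0 ρ} μ :=
    hf.integrableOn.bdd_mul (hgs.aestronglyMeasurable hs)
      ((ae_restrict_iff' hs).2 (.of_forall fun x hx => hC _ hx))
  refine (hint.integrable_indicator hs).congr ?_
  filter_upwards [Measure.ae_ne μ 0] with x hx
  refine indicator_apply_eq_self.2 fun hxs => ?_
  have hρx : ρ ≤ ‖x‖ := (not_le.1 fun hle => hxs ⟨norm_pos_iff.2 hx, hle⟩).le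
  rw [hf_zero x hρx, mul_zero]

lemma isBigO_one_of_nonneg_of_monotoneOn {g : ℝ → ℝ} {R : ℝ} (hR : 0 < R)
    (hg : ∀ r ∈ Ioo 0 R, 0 ≤ g r) (hg_mono : MonotoneOn g (Ioo 0 R)) :
    g =O[𝓝[>] 0] (1 : ℝ → ℝ) := by
  have hmid : R / 2 ∈ Ioo 0 R := ⟨half_pos hR, half_lt_self hR⟩
  refine .of_bound (g (R / 2)) ?_
  filter_upwards [Ioo_mem_nhdsGT hmid.1] with r hr
  have hrR : r ∈ Ioo 0 R := ⟨hr.1, hr.2.trans hmid.2⟩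
  simpa [abs_of_nonneg (hg r hrR)] using hg_mono hrR hmid hr.2.le

-- The square `(r f' - b f) ^ 2`, where `b = r ψ' / ψ`, is what the Hardy inequality discards.
lemma hasDerivAt_hardy {ψ : ℝ → ℝ} {s : Set ℝ} (hs : IsOpen s) (hψ : ContDiffOn ℝ 2 ψ s)
    {r : ℝ} (hrs : r ∈ s) (hψr : ψ r ≠ 0) (hr : r ≠ 0) {w f : ℝ → ℝ} {w' f' : ℝ}
    (hw : HasDerivAt w w' r) (hf : HasDerivAt f f' r) {k : ℝ} {m : ℕ} (hk : k = m + 2) :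
    HasDerivAt (fun r => r ^ (m + 1) * (w r * (r * logDeriv ψ r)) * f r ^ 2)
      (r ^ (m + 2) * w r * f' ^ 2 - r ^ m * w r * (r ^ 2 * radialPotential k ψ r) * f r ^ 2 -
        r ^ m * w r * (r * f' - r * logDeriv ψ r * f r) ^ 2 +
        r ^ (m + 1) * w' * (r * logDeriv ψ r) * f r ^ 2) r := by
  have hb := hasDerivAt_mul_logDeriv hs hψ hrs hψr hr k
  refine (((hasDerivAt_pow (m + 1) r).mul (hw.mul hb)).mul (hf.pow 2)).congr_deriv ?_
  simp only [Pi.mul_apply, Pi.pow_apply, Nat.add_sub_cancel, hk]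
  push_cast
  field_simp
  ring

namespace IsHardyRellichPair

variable {d R : ℝ} {φ ψ : ℝ → ℝ}

lemma hasDerivAt_hardyWeight (h : IsHardyRellichPair d φ ψ R) {r : ℝ} (hr : r ∈ Ioo 0 R) :
    HasDerivAt (hardyWeight d φ) (deriv (hardyWeight d φ) r) r := by
  have hV : ContDiffOn ℝ 1 (radialPotential (d - 1) φ) (Ioo 0 R) :=
    contDiffOn_radialPotential (h.contDiffOn_left.of_le (by norm_num)) h.left_ne_zero (d - 1)
  have hw : ContDiffOn ℝ 1 (hardyWeight d φ) (Ioo 0 R) :=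
    contDiffOn_const.add ((contDiffOn_id.pow 2).mul hV)
  exact ((hw.differentiableOn one_ne_zero).differentiableAt (isOpen_Ioo.mem_nhds hr)).hasDerivAt

lemma deriv_hardyWeight_nonneg (h : IsHardyRellichPair d φ ψ R) {r : ℝ} (hr : r ∈ Ioo 0 R) :
    0 ≤ deriv (hardyWeight d φ) r := by
  rw [← derivWithin_of_isOpen isOpen_Ioo hr]
  exact h.monotoneOn_hardyWeight.derivWithin_nonneg

lemma continuousOn_logDeriv_left (h : IsHardyRellichPair d φ ψ R) :
    ContinuousOn (fun r => r * logDeriv φ r) (Ioo 0 R) :=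
  continuousOn_id.mul (contDiffOn_logDeriv (n := 2) (h.contDiffOn_left.of_le (by norm_num))
    h.left_ne_zero).continuousOn

lemma continuousOn_logDeriv_right (h : IsHardyRellichPair d φ ψ R) :
    ContinuousOn (fun r => r * logDeriv ψ r) (Ioo 0 R) :=
  continuousOn_id.mul (contDiffOn_logDeriv (n := 1) (h.contDiffOn_right.of_le (by norm_num))
    h.right_ne_zero).continuousOn

lemma isBigO_hardyWeight (h : IsHardyRellichPair d φ ψ R) (hR : 0 < R) :
    hardyWeight d φ =O[𝓝[>] 0] (1 : ℝ → ℝ) :=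
  isBigO_one_of_nonneg_of_monotoneOn hR h.hardyWeight_nonneg h.monotoneOn_hardyWeight

lemma continuousOn_hardyWeight (h : IsHardyRellichPair d φ ψ R) :
    ContinuousOn (hardyWeight d φ) (Ioo 0 R) :=
  fun _ hr => (h.hasDerivAt_hardyWeight hr).continuousAt.continuousWithinAt

lemma deriv_hardyWeight_mul_nonpos (h : IsHardyRellichPair d φ ψ R) {r : ℝ} (hr : r ∈ Ioo 0 R) :
    deriv (hardyWeight d φ) r * (r * logDeriv ψ r) ≤ 0 :=
  mul_nonpos_of_nonneg_of_nonpos (h.deriv_hardyWeight_nonneg hr)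
    (mul_nonpos_of_nonneg_of_nonpos hr.1.le (h.logDeriv_right_nonpos r hr))

lemma isSubprimitive_ray (h : IsHardyRellichPair d φ ψ R) {m : ℕ} (hd : d = m + 5) {ρ : ℝ}
    (hρ : ρ ∈ Ioo 0 R) {f f' f'' : ℝ → ℝ} (hf : ∀ r, HasDerivAt f (f' r) r)
    (hf' : ∀ r, HasDerivAt f' (f'' r) r) (hfρ : f ρ = 0) (hfρ' : f' ρ = 0) :
    IsSubprimitive
      (fun r => (d - 1) * (r ^ (m + 3) * f' r ^ 2) +
        r ^ (m + 3) * (1 * (r * logDeriv φ r)) * f' r ^ 2 +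
        r ^ (m + 1) * (hardyWeight d φ r * (r * logDeriv ψ r)) * f r ^ 2)
      (fun r => r ^ (m + 4) * ((f'' r + (d - 1) / r * f' r) ^ 2 -
        hardyRellichWeight d φ ψ r * f r ^ 2)) ρ := by
  have hfc : Continuous f := continuous_iff_continuousAt.2 fun r => (hf r).continuousAt
  have hfc' : Continuous f' := continuous_iff_continuousAt.2 fun r => (hf' r).continuousAt
  refine ⟨?_, by simp, by simp [hfρ, hfρ'], fun r hr => ?_⟩
  · have hsub : Ioc 0 ρ ⊆ Ioo 0 R := fun r hr => ⟨hr.1, hr.2.trans_lt hρ.2⟩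
    have hφ := continuousOn_pow_succ_mul_of_isBigO_one (h.continuousOn_logDeriv_left.mono hsub)
      h.isBigO_logDeriv_left (m + 2)
    have hψ := continuousOn_pow_succ_mul_of_isBigO_one
      ((h.continuousOn_hardyWeight.mul h.continuousOn_logDeriv_right).mono hsub)
      (((h.isBigO_hardyWeight (hρ.1.trans hρ.2)).mul h.isBigO_logDeriv_right).congr_right
        (by simp)) m
    simp only [one_mul]
    fun_prop
  have hrR : r ∈ Ioo 0 R := ⟨hr.1, hr.2.trans hρ.2⟩
  have hr0 : 0 < r := hr.1
  refine ⟨_, ((((hasDerivAt_pow (m + 3) r).mul ((hf' r).pow 2)).const_mul (d - 1)).add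
    (hasDerivAt_hardy isOpen_Ioo (h.contDiffOn_left.of_le (by norm_num)) hrR
      (h.left_ne_zero r hrR) hr0.ne' (hasDerivAt_const r 1) (hf' r) (k := d - 1) (m := m + 2)
      (by push_cast; linarith))).add
    (hasDerivAt_hardy isOpen_Ioo h.contDiffOn_right hrR (h.right_ne_zero r hrR) hr0.ne'
      (h.hasDerivAt_hardyWeight hrR) (hf r) (k := d - 3) (m := m) (by linarith)), ?_⟩
  have hsq₁ : 0 ≤ r ^ (m + 2) * (r * f'' r - r * logDeriv φ r * f' r) ^ 2 := by positivity
  have hsq₂ : 0 ≤ r ^ m * hardyWeight d φ r * (r * f' r - r * logDeriv ψ r * f r) ^ 2 :=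
    mul_nonneg (mul_nonneg (by positivity) (h.hardyWeight_nonneg r hrR)) (sq_nonneg _)
  have hmono : 0 ≤ r ^ (m + 1) * f r ^ 2 * -(deriv (hardyWeight d φ) r * (r * logDeriv ψ r)) :=
    mul_nonneg (by positivity) (neg_nonneg.2 (h.deriv_hardyWeight_mul_nonpos hrR))
  refine le_of_eq_of_le ?_ (sub_le_self _ (add_nonneg (add_nonneg hsq₁ hsq₂) hmono))
  simp only [hardyWeight, hardyRellichWeight, Pi.pow_apply, hd]
  push_cast
  field_simp
  ring

lemma continuousOn_sq_mul_radialPotential_right (h : IsHardyRellichPair d φ ψ R) (k : ℝ) :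
    ContinuousOn (fun r => r ^ 2 * radialPotential k ψ r) (Ioo 0 R) :=
  (continuousOn_id.pow 2).mul (contDiffOn_radialPotential (n := 0)
    (h.contDiffOn_right.of_le (by norm_num)) h.right_ne_zero k).continuousOn

variable {E : Type*} [NormedAddCommGroup E] [NormedSpace ℝ E] [FiniteDimensional ℝ E]
  [MeasurableSpace E] [BorelSpace E] {μ : Measure E} [μ.IsAddHaarMeasure]

lemma integrable_hardyRellichWeight_mul_sq (h : IsHardyRellichPair d φ ψ R)
    (hE : 5 ≤ Module.finrank ℝ E) {ρ : ℝ} (hρ : ρ ∈ Ioo 0 R) {u : E → ℝ} (hu : Continuous u)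
    (hu_supp : HasCompactSupport u) (hu_zero : ∀ x, ρ ≤ ‖x‖ → u x = 0) :
    Integrable (fun x => hardyRellichWeight d φ ψ ‖x‖ * u x ^ 2) μ := by
  have : Nontrivial E := Module.nontrivial_of_finrank_pos (R := ℝ) (by omega)
  have hsub : Ioc 0 ρ ⊆ Ioo 0 R := fun r hr => ⟨hr.1, hr.2.trans_lt hρ.2⟩
  have hcont := (h.continuousOn_sq_mul_radialPotential_right (d - 3)).mul h.continuousOn_hardyWeight
  have hbdd := (h.isBigO_radialPotential_right.mul
    (h.isBigO_hardyWeight (hρ.1.trans hρ.2))).congr_right fun _ => mul_one _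
  have hint := integrable_comp_norm_mul (hcont.mono hsub) hbdd
    (integrable_inv_norm_pow_mul (μ := μ) hE (hu.mul hu) hu_supp.mul_right)
    fun x hx => by simp [hu_zero x hx]
  refine hint.congr ?_
  filter_upwards [Measure.ae_ne μ 0] with x hx
  rw [hardyRellichWeight_eq (norm_ne_zero_iff.2 hx)]
  simp only [Pi.mul_apply]
  ring

theorem integral_hardyRellichWeight_mul_sq_le_integral_scaledRadialLap_sq
    (h : IsHardyRellichPair (Module.finrank ℝ E) φ ψ R) (hE : 5 ≤ Module.finrank ℝ E) (hR : 0 < R)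
    {u : E → ℝ} (hu : ContDiff ℝ 2 u) (hu_supp : HasCompactSupport u)
    (hsupp : tsupport u ⊆ ball 0 R) :
    ∫ x, hardyRellichWeight (Module.finrank ℝ E) φ ψ ‖x‖ * u x ^ 2 ∂μ ≤
      ∫ x, (‖x‖ ^ 4)⁻¹ * (scaledRadialLap u x * scaledRadialLap u x) ∂μ := by
  obtain ⟨m, hm⟩ := Nat.exists_eq_add_of_le' hE
  have : Nontrivial E := Module.nontrivial_of_finrank_pos (R := ℝ) (by omega)
  obtain ⟨ρ, hρ, hρ_supp⟩ := exists_pos_lt_subset_ball hR (isClosed_tsupport u) hsupp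
  have hρ_notMem : ∀ x, ρ ≤ ‖x‖ → x ∉ tsupport u := fun x hx hxu =>
    hx.not_gt (mem_ball_zero_iff.1 (hρ_supp hxu))
  have hu_zero : ∀ x, ρ ≤ ‖x‖ → u x = 0 := fun x hx =>
    image_eq_zero_of_notMem_tsupport (hρ_notMem x hx)
  have hDu_zero : ∀ x, ρ ≤ ‖x‖ → scaledRadialLap u x = 0 := fun x hx =>
    image_eq_zero_of_notMem_tsupport fun hmem =>
      hρ_notMem x hx (tsupport_scaledRadialLap_subset u hmem)
  have hDu := integrable_inv_norm_pow_mul_scaledRadialLap_mul (μ := μ) hE hu hu_supp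
    (contDiff_scaledRadialLap (n := 0) hu).continuous
  have hW := h.integrable_hardyRellichWeight_mul_sq (μ := μ) hE hρ hu.continuous hu_supp hu_zero
  rw [← sub_nonneg, ← integral_sub hDu hW]
  refine integral_nonneg_of_isSubprimitive_ray hρ.1.le (hDu.sub hW)
    (fun x hx => by simp [hu_zero x hx, hDu_zero x hx]) fun z hz => ?_
  have hρz : ρ ≤ ‖ρ • z‖ := (norm_smul_of_norm_eq_one hz hρ.1.le).ge
  have hfderiv_zero : fderiv ℝ u (ρ • z) z = 0 := by
    rw [fderiv_of_notMem_tsupport ℝ (hρ_notMem _ hρz), zero_apply]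
  refine ⟨_, (h.isSubprimitive_ray (by rw [hm]; push_cast; rfl) hρ
    (hasDerivAt_comp_smul (hu.of_le one_le_two) z) (hasDerivAt_fderiv_comp_smul hu z)
    (hu_zero _ hρz) hfderiv_zero).congr fun r hr => ?_⟩
  have hr0 : r ≠ 0 := hr.1.ne'
  simp only [norm_smul_of_norm_eq_one hz hr.1.le, scaledRadialLap_smul hu, hm,
    show m + 5 - 1 = m + 4 by rfl]
  push_cast
  field_simp

end IsHardyRellichPair

end HardyRellichPair

theorem hardy_rellich_dim_nine_general {N : ℕ} (hN : 5 ≤ N) {φ ψ : ℝ → ℝ} {R : ℝ} (hR : 0 < R)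
    (h : IsHardyRellichPair N φ ψ R) {u : EuclideanSpace ℝ (Fin N) → ℝ} (hu : ContDiff ℝ 3 u)
    (hsupp : tsupport u ⊆ ball 0 R) :
    ∫ x in ball (0 : EuclideanSpace ℝ (Fin N)) R, hardyRellichWeight N φ ψ ‖x‖ * u x ^ 2 ≤
      ∫ x in ball (0 : EuclideanSpace ℝ (Fin N)) R, lap u x ^ 2 := by
  have hu_supp : HasCompactSupport u :=
    (isCompact_closedBall 0 R).of_isClosed_subset (isClosed_tsupport u)
      (hsupp.trans ball_subset_closedBall)
  have hu_zero : ∀ x ∉ ball 0 R, u x = 0 := fun x hx =>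
    image_eq_zero_of_notMem_tsupport fun h => hx (hsupp h)
  have hlap_zero : ∀ x ∉ ball 0 R, lap u x = 0 := fun x hx =>
    image_eq_zero_of_notMem_tsupport fun h => hx (hsupp (tsupport_lap_subset u h))
  have hfinrank : Module.finrank ℝ (EuclideanSpace ℝ (Fin N)) = N := finrank_euclideanSpace_fin
  rw [setIntegral_eq_integral_of_forall_compl_eq_zero fun x hx => by simp [hu_zero x hx],
    setIntegral_eq_integral_of_forall_compl_eq_zero fun x hx => by simp [hlap_zero x hx]]
  have hradial := (hfinrank.symm ▸ h :
    IsHardyRellichPair _ φ ψ R).integral_hardyRellichWeight_mul_sq_le_integral_scaledRadialLap_sq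
    (μ := volume) (by simpa using hN) hR (hu.of_le (by norm_num)) hu_supp hsupp
  rw [hfinrank] at hradial
  exact hradial.trans (integral_scaledRadialLap_sq_le_integral_lap_sq hN hu hu_supp)

section ConcretePair

lemma hasDerivAt_rpow {r : ℝ} (hr : 0 < r) (p : ℝ) :
    HasDerivAt (fun r : ℝ => r ^ p) (p * (r ^ p / r)) r := by
  simpa [Real.rpow_sub_one hr.ne'] using Real.hasDerivAt_rpow_const (p := p) (.inl hr.ne')

lemma hasDerivAt_rpow_div {r : ℝ} (hr : 0 < r) (p : ℝ) :
    HasDerivAt (fun r : ℝ => r ^ p / r) ((p - 1) * (r ^ p / r ^ 2)) r := by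
  refine ((hasDerivAt_rpow hr p).div (hasDerivAt_id r) hr.ne').congr_deriv ?_
  simp only [id]
  field_simp

lemma inv_le_rpow_of_le_neg_one {r : ℝ} (hr : r ∈ Ioo 0 1) {p : ℝ} (hp : p ≤ -1) :
    r⁻¹ ≤ r ^ p := by
  rw [← Real.rpow_neg_one]
  exact Real.rpow_le_rpow_of_exponent_ge hr.1 hr.2.le hp

lemma contDiffOn_rpow_Ioo (p R : ℝ) {n : WithTop ℕ∞} :
    ContDiffOn ℝ n (fun r : ℝ => r ^ p) (Ioo 0 R) :=
  contDiffOn_id.rpow_const_of_ne fun _ hr => hr.1.ne'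

lemma two_le_inv_add_self {r : ℝ} (hr : 0 < r) : 2 ≤ r⁻¹ + r := by
  have hsq : 0 ≤ (r - 1) ^ 2 / r := by positivity
  have heq : (r - 1) ^ 2 / r = r⁻¹ + r - 2 := by
    field_simp
    ring
  linarith

lemma contDiffOn_phiFun {n : WithTop ℕ∞} : ContDiffOn ℝ n phiFun (Ioo 0 1) :=
  ((contDiffOn_rpow_Ioo _ 1).add contDiffOn_id).sub contDiffOn_const

lemma contDiffOn_psiFun {n : WithTop ℕ∞} : ContDiffOn ℝ n psiFun (Ioo 0 1) :=
  (((((contDiffOn_rpow_Ioo _ 1).add (contDiffOn_const.mul (contDiffOn_rpow_Ioo _ 1))).add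
    (contDiffOn_const.mul (contDiffOn_id.inv fun _ hr => hr.1.ne'))).add
    (contDiffOn_const.mul contDiffOn_id)).add
    (contDiffOn_const.mul (contDiffOn_id.pow 2))).sub contDiffOn_const

lemma hasDerivAt_phiFun {r : ℝ} (hr : 0 < r) :
    HasDerivAt phiFun (-7 / 2 * (r ^ (-(7 : ℝ) / 2) / r) + 1) r :=
  ((hasDerivAt_rpow hr _).add (hasDerivAt_id r)).sub_const 1.9

lemma hasDerivAt_deriv_phiFun {r : ℝ} (hr : 0 < r) :
    HasDerivAt (deriv phiFun) (63 / 4 * (r ^ (-(7 : ℝ) / 2) / r ^ 2)) r := by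
  refine ((((hasDerivAt_rpow_div hr (-(7 : ℝ) / 2)).const_mul (-7 / 2 : ℝ)).add_const
    1).congr_of_eventuallyEq ?_).congr_deriv (by ring)
  filter_upwards [lt_mem_nhds hr] with t ht using (hasDerivAt_phiFun ht).deriv

lemma hasDerivAt_psiFun {r : ℝ} (hr : 0 < r) :
    HasDerivAt psiFun (-5 / 2 * (r ^ (-(5 : ℝ) / 2) / r) - 33.8 * (r ^ (-(1.69 : ℝ)) / r) -
      10 * (r ^ 2)⁻¹ + 10 + 14 * r) r := by
  refine (((((((hasDerivAt_rpow hr _).add ((hasDerivAt_rpow hr _).const_mul 20)).add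
    ((hasDerivAt_inv hr.ne').const_mul 10)).add ((hasDerivAt_id r).const_mul 10)).add
    ((hasDerivAt_pow 2 r).const_mul 7)).sub_const 48)).congr_deriv ?_
  ring

lemma hasDerivAt_deriv_psiFun {r : ℝ} (hr : 0 < r) :
    HasDerivAt (deriv psiFun) (35 / 4 * (r ^ (-(5 : ℝ) / 2) / r ^ 2) +
      90.922 * (r ^ (-(1.69 : ℝ)) / r ^ 2) + 20 * (r ^ 3)⁻¹ + 14) r := by
  refine (((((((hasDerivAt_rpow_div hr (-(5 : ℝ) / 2)).const_mul (-5 / 2 : ℝ)).sub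
    ((hasDerivAt_rpow_div hr (-(1.69 : ℝ))).const_mul 33.8)).sub
    (((hasDerivAt_pow 2 r).inv (by positivity)).const_mul 10)).add_const 10).add
    ((hasDerivAt_id r).const_mul 14)).congr_of_eventuallyEq ?_).congr_deriv ?_
  · filter_upwards [lt_mem_nhds hr] with t ht using (hasDerivAt_psiFun ht).deriv
  · field_simp
    ring

lemma phiFun_pos {r : ℝ} (hr : r ∈ Ioo 0 1) : 0 < phiFun r := by
  have hX : r⁻¹ ≤ r ^ (-(7 : ℝ) / 2) := inv_le_rpow_of_le_neg_one hr (by norm_num)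
  have hinv := two_le_inv_add_self hr.1
  rw [phiFun]
  linarith

lemma psiFun_pos {r : ℝ} (hr : r ∈ Ioo 0 1) : 0 < psiFun r := by
  have hX : r⁻¹ ≤ r ^ (-(5 : ℝ) / 2) := inv_le_rpow_of_le_neg_one hr (by norm_num)
  have hY : r⁻¹ ≤ r ^ (-(1.69 : ℝ)) := inv_le_rpow_of_le_neg_one hr (by norm_num)
  have hfactor : 31 * r⁻¹ + 10 * r + 7 * r ^ 2 - 48 =
      (1 - r) * (31 - 17 * r - 7 * r ^ 2) / r := by
    have := hr.1
    field_simp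
    ring
  have hpos : 0 < (1 - r) * (31 - 17 * r - 7 * r ^ 2) / r :=
    div_pos (mul_pos (by linarith [hr.2]) (by nlinarith [hr.1, hr.2])) hr.1
  rw [psiFun]
  linarith

lemma mul_logDeriv_phiFun {r : ℝ} (hr : 0 < r) :
    r * logDeriv phiFun r = (r - 7 / 2 * r ^ (-(7 : ℝ) / 2)) / phiFun r := by
  rw [logDeriv_apply, (hasDerivAt_phiFun hr).deriv]
  field_simp
  ring

lemma mul_logDeriv_psiFun {r : ℝ} (hr : 0 < r) :
    r * logDeriv psiFun r = (-5 / 2 * r ^ (-(5 : ℝ) / 2) - 33.8 * r ^ (-(1.69 : ℝ)) - 10 * r⁻¹ +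
      10 * r + 14 * r ^ 2) / psiFun r := by
  rw [logDeriv_apply, (hasDerivAt_psiFun hr).deriv]
  field_simp

lemma hardyWeight_phiFun {r : ℝ} (hr : r ∈ Ioo 0 1) :
    hardyWeight 9 phiFun r = (81 / 4 * r ^ (-(7 : ℝ) / 2) - 15.2) / phiFun r := by
  have hφ := (phiFun_pos hr).ne'
  have hr0 : r ≠ 0 := hr.1.ne'
  rw [hardyWeight, radialPotential, (hasDerivAt_deriv_phiFun hr.1).deriv,
    (hasDerivAt_phiFun hr.1).deriv]
  have hφ_def : phiFun r = r ^ (-(7 : ℝ) / 2) + r - 1.9 := rfl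
  generalize r ^ (-(7 : ℝ) / 2) = X at hφ_def ⊢
  field_simp
  rw [hφ_def]
  ring

lemma sq_mul_radialPotential_psiFun {r : ℝ} (hr : 0 < r) :
    r ^ 2 * radialPotential 6 psiFun r = (25 / 4 * r ^ (-(5 : ℝ) / 2) +
      111.878 * r ^ (-(1.69 : ℝ)) + 40 * r⁻¹ - 60 * r - 98 * r ^ 2) / psiFun r := by
  rw [radialPotential, (hasDerivAt_deriv_psiFun hr).deriv, (hasDerivAt_psiFun hr).deriv]
  field_simp
  ring

lemma logDeriv_psiFun_nonpos {r : ℝ} (hr : r ∈ Ioo 0 1) : logDeriv psiFun r ≤ 0 := by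
  have hX : r⁻¹ ≤ r ^ (-(5 : ℝ) / 2) := inv_le_rpow_of_le_neg_one hr (by norm_num)
  have hY : r⁻¹ ≤ r ^ (-(1.69 : ℝ)) := inv_le_rpow_of_le_neg_one hr (by norm_num)
  have hinv : 1 < r⁻¹ := (one_lt_inv₀ hr.1).2 hr.2
  have hsq : r ^ 2 < 1 := pow_lt_one₀ hr.1.le hr.2 two_ne_zero
  refine nonpos_of_mul_nonpos_right ?_ hr.1
  rw [mul_logDeriv_psiFun hr.1]
  exact div_nonpos_of_nonpos_of_nonneg (by linarith [hr.2]) (psiFun_pos hr).le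

lemma hardyWeight_phiFun_nonneg {r : ℝ} (hr : r ∈ Ioo 0 1) : 0 ≤ hardyWeight 9 phiFun r := by
  have hX : r⁻¹ ≤ r ^ (-(7 : ℝ) / 2) := inv_le_rpow_of_le_neg_one hr (by norm_num)
  have hinv : 1 < r⁻¹ := (one_lt_inv₀ hr.1).2 hr.2
  rw [hardyWeight_phiFun hr]
  exact div_nonneg (by linarith) (phiFun_pos hr).le

lemma monotoneOn_hardyWeight_phiFun : MonotoneOn (hardyWeight 9 phiFun) (Ioo 0 1) := by
  have hderiv : ∀ r ∈ Ioo (0 : ℝ) 1, HasDerivAt (hardyWeight 9 phiFun)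
      ((81.4625 * (r ^ (-(7 : ℝ) / 2) / r) - 91.125 * r ^ (-(7 : ℝ) / 2) + 15.2) /
        phiFun r ^ 2) r := by
    intro r hr
    refine (((((hasDerivAt_rpow hr.1 (-(7 : ℝ) / 2)).const_mul (81 / 4)).sub_const 15.2).div
      (hasDerivAt_phiFun hr.1) (phiFun_pos hr).ne').congr_of_eventuallyEq ?_).congr_deriv ?_
    · filter_upwards [isOpen_Ioo.mem_nhds hr] with t ht using hardyWeight_phiFun ht
    · congr 1
      rw [phiFun]
      have := hr.1
      field_simp
      ring
  refine monotoneOn_of_hasDerivWithinAt_nonneg (convex_Ioo 0 1)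
    (fun r hr => (hderiv r hr).continuousAt.continuousWithinAt)
    (fun r hr => (hderiv r (interior_subset hr)).hasDerivWithinAt) fun r hr => ?_
  rw [interior_Ioo] at hr
  have hX : 0 < r ^ (-(7 : ℝ) / 2) := Real.rpow_pos_of_pos hr.1 _
  -- Bernoulli's inequality for `r ^ (9 / 2)`, multiplied by `r ^ (-9 / 2)`.
  have hbernoulli : (1 + 9 / 2 * (r - 1)) * (r ^ (-(7 : ℝ) / 2) / r) ≤ 1 := by
    have h92 := one_add_mul_self_le_rpow_one_add (s := r - 1) (by linarith [hr.1])
      (p := 9 / 2) (by norm_num)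
    rw [add_sub_cancel] at h92
    refine (mul_le_mul_of_nonneg_right h92 (div_pos hX hr.1).le).trans_eq ?_
    rw [← Real.rpow_sub_one hr.1.ne', ← Real.rpow_add hr.1]
    norm_num
  refine div_nonneg ?_ (sq_nonneg _)
  have hcancel : r * (r ^ (-(7 : ℝ) / 2) / r) = r ^ (-(7 : ℝ) / 2) := mul_div_cancel₀ _ hr.1.ne'
  nlinarith [div_pos hX hr.1, hr.1, hr.2]

lemma isBigO_mul_logDeriv_phiFun :
    (fun r => r * logDeriv phiFun r) =O[𝓝[>] 0] (1 : ℝ → ℝ) := by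
  refine .of_bound 7 ?_
  filter_upwards [Ioo_mem_nhdsGT (show (0 : ℝ) < 1 / 4 by norm_num)] with r hr
  have hr1 : r ∈ Ioo 0 1 := ⟨hr.1, hr.2.trans (by norm_num)⟩
  have hinv : 4 ≤ r⁻¹ := le_inv_of_le_inv₀ hr.1 (by linarith [hr.2])
  have hX : r⁻¹ ≤ r ^ (-(7 : ℝ) / 2) := inv_le_rpow_of_le_neg_one hr1 (by norm_num)
  rw [mul_logDeriv_phiFun hr.1, norm_div, Real.norm_of_nonneg (phiFun_pos hr1).le, Pi.one_apply,
    norm_one, mul_one, div_le_iff₀ (phiFun_pos hr1), Real.norm_eq_abs, abs_le, phiFun]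
  constructor <;> linarith [hr.1, hr.2]

lemma isBigO_mul_logDeriv_psiFun :
    (fun r => r * logDeriv psiFun r) =O[𝓝[>] 0] (1 : ℝ → ℝ) := by
  refine .of_bound 5 ?_
  filter_upwards [Ioo_mem_nhdsGT (show (0 : ℝ) < 1 / 4 by norm_num)] with r hr
  have hr1 : r ∈ Ioo 0 1 := ⟨hr.1, hr.2.trans (by norm_num)⟩
  have hinv : 4 ≤ r⁻¹ := le_inv_of_le_inv₀ hr.1 (by linarith [hr.2])
  have hX : r⁻¹ ≤ r ^ (-(5 : ℝ) / 2) := inv_le_rpow_of_le_neg_one hr1 (by norm_num)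
  have hY : r⁻¹ ≤ r ^ (-(1.69 : ℝ)) := inv_le_rpow_of_le_neg_one hr1 (by norm_num)
  rw [mul_logDeriv_psiFun hr.1, norm_div, Real.norm_of_nonneg (psiFun_pos hr1).le, Pi.one_apply,
    norm_one, mul_one, div_le_iff₀ (psiFun_pos hr1), Real.norm_eq_abs, abs_le, psiFun]
  constructor <;> nlinarith [hr.1, hr.2]

lemma isBigO_sq_mul_radialPotential_psiFun :
    (fun r => r ^ 2 * radialPotential 6 psiFun r) =O[𝓝[>] 0] (1 : ℝ → ℝ) := by
  refine .of_bound 20 ?_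
  filter_upwards [Ioo_mem_nhdsGT (show (0 : ℝ) < 1 / 4 by norm_num)] with r hr
  have hr1 : r ∈ Ioo 0 1 := ⟨hr.1, hr.2.trans (by norm_num)⟩
  have hinv : 4 ≤ r⁻¹ := le_inv_of_le_inv₀ hr.1 (by linarith [hr.2])
  have hX : r⁻¹ ≤ r ^ (-(5 : ℝ) / 2) := inv_le_rpow_of_le_neg_one hr1 (by norm_num)
  have hY : r⁻¹ ≤ r ^ (-(1.69 : ℝ)) := inv_le_rpow_of_le_neg_one hr1 (by norm_num)
  rw [sq_mul_radialPotential_psiFun hr.1, norm_div, Real.norm_of_nonneg (psiFun_pos hr1).le,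
    Pi.one_apply, norm_one, mul_one, div_le_iff₀ (psiFun_pos hr1), Real.norm_eq_abs, abs_le, psiFun]
  constructor <;> nlinarith [hr.1, hr.2]

lemma isHardyRellichPair_phiFun_psiFun : IsHardyRellichPair 9 phiFun psiFun 1 where
  contDiffOn_left := contDiffOn_phiFun
  contDiffOn_right := contDiffOn_psiFun
  left_ne_zero _ hr := (phiFun_pos hr).ne'
  right_ne_zero _ hr := (psiFun_pos hr).ne'
  logDeriv_right_nonpos _ hr := logDeriv_psiFun_nonpos hr
  hardyWeight_nonneg _ hr := hardyWeight_phiFun_nonneg hr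
  monotoneOn_hardyWeight := monotoneOn_hardyWeight_phiFun
  isBigO_logDeriv_left := isBigO_mul_logDeriv_phiFun
  isBigO_logDeriv_right := isBigO_mul_logDeriv_psiFun
  isBigO_radialPotential_right := by
    norm_num only
    exact isBigO_sq_mul_radialPotential_psiFun

lemma hardyRellichWeight_phiFun_psiFun (r : ℝ) :
    hardyRellichWeight 9 phiFun psiFun r = Qfun r * (Pfun r + 8 / r ^ 2) := by
  norm_num [hardyRellichWeight, radialPotential, Qfun, Pfun]

end ConcretePair

/-- improved Hardy-Rellich inequality in dimension N = 9, for u ∈ C_c^∞(B). -/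
theorem hardy_rellich_dim_nine
    (u : EuclideanSpace ℝ (Fin 9) → ℝ) (hu : ContDiff ℝ (⊤ : ℕ∞) u)
    (hsupp : HasCompactSupport u)
    (hsupp' : tsupport u ⊆ ball (0 : EuclideanSpace ℝ (Fin 9)) 1) :
    ∫ x in ball (0 : EuclideanSpace ℝ (Fin 9)) 1,
        Qfun ‖x‖ * (Pfun ‖x‖ + 8 / ‖x‖ ^ 2) * u x ^ 2 ≤
      ∫ x in ball (0 : EuclideanSpace ℝ (Fin 9)) 1, (lap u x) ^ 2 := by
  have h := hardy_rellich_dim_nine_general (N := 9) (by norm_num) one_pos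
    (mod_cast isHardyRellichPair_phiFun_psiFun) (contDiff_infty.1 hu 3) hsupp'
  simpa only [Nat.cast_ofNat, hardyRellichWeight_phiFun_psiFun] using h
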